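/- Let N ≥ 2, s ∈ (0,1), let B ⊂ ℝ^N be an open ball centered at the origin, and let u be a continuous first nontrivial eigenfunction on B such that u is not antisymmetric with respect to any hyperplane through the origin, i.e. for every e ∈ 𝕊^{N−1} one has u∘σ_e ≢ −u. Let p ∈ 𝕊^{N−1} be such that u is foliated Schwarz symmetric with respect to p. Then u + u∘σ_p is a first nontrivial eigenfunction on B which is radially symmetric. -/

import Mathlib

open MeasureTheory Filter Topology Bornology Set
open scoped ENNReal NNReal

noncomputable section

namespace FracNeumann

abbrev Euc (N : ℕ) : Type := EuclideanSpace ℝ (Fin N)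

/-- The kernel weight `|x - y| ^ (N + 2s)`. -/
def kern (N : ℕ) (s : ℝ) (x y : Euc N) : ℝ := ‖x - y‖ ^ ((N : ℝ) + 2 * s)

/-- The region `ℝ^{2N} \ (Ω^c × Ω^c)`, where `Ω^c := ℝ^N \ closure Ω`. -/
def reg (N : ℕ) (Ω : Set (Euc N)) : Set (Euc N × Euc N) :=
  {q | q.1 ∈ closure Ω ∨ q.2 ∈ closure Ω}

/-- The squared seminorm `[u]_{H^s_{Ω,0}}²`, as an extended real number. -/
def semiSq (N : ℕ) (s : ℝ) (Ω : Set (Euc N)) (u : Euc N → ℝ) : ℝ≥0∞ :=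
  ∫⁻ q in reg N Ω, ENNReal.ofReal ((u q.1 - u q.2) ^ 2 / kern N s q.1 q.2)

/-- `∫_Ω u²`, as an extended real number. -/
def l2sq (N : ℕ) (Ω : Set (Euc N)) (u : Euc N → ℝ) : ℝ≥0∞ :=
  ∫⁻ x in Ω, ENNReal.ofReal ((u x) ^ 2)

/-- Membership in `H^s_{Ω,0}`. -/
def memHs (N : ℕ) (s : ℝ) (Ω : Set (Euc N)) (u : Euc N → ℝ) : Prop :=
  Measurable u ∧ l2sq N Ω u < ⊤ ∧ semiSq N s Ω u < ⊤

/-- The squared Gagliardo seminorm `[u]_{H^s(Ω)}²`. -/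
def semiSqOn (N : ℕ) (s : ℝ) (Ω : Set (Euc N)) (u : Euc N → ℝ) : ℝ≥0∞ :=
  ∫⁻ q in Ω ×ˢ Ω, ENNReal.ofReal ((u q.1 - u q.2) ^ 2 / kern N s q.1 q.2)

/-- Membership in `H^s(Ω)` (for functions defined on all of `ℝ^N`). -/
def memHsOn (N : ℕ) (s : ℝ) (Ω : Set (Euc N)) (u : Euc N → ℝ) : Prop :=
  Measurable u ∧ l2sq N Ω u < ⊤ ∧ semiSqOn N s Ω u < ⊤

/-- The normalizing constant `c_{N,s}` of the fractional Laplacian. -/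
def cNs (N : ℕ) (s : ℝ) : ℝ :=
  (4 : ℝ) ^ s * s * Real.Gamma ((N : ℝ) / 2 + s) /
    (Real.pi ^ ((N : ℝ) / 2) * Real.Gamma (1 - s))

/-- The nonlocal Neumann derivative `𝒩_s u`. -/
def Nneu (N : ℕ) (s : ℝ) (Ω : Set (Euc N)) (u : Euc N → ℝ) (x : Euc N) : ℝ :=
  cNs N s * ∫ y in Ω, (u x - u y) / kern N s x y

/-- Membership in `H̃^s_{Ω,0}`: members of `H^s_{Ω,0}` with `𝒩_s u = 0` a.e. in `Ω^c`. -/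
def memHsTilde (N : ℕ) (s : ℝ) (Ω : Set (Euc N)) (u : Euc N → ℝ) : Prop :=
  memHs N s Ω u ∧ ∀ᵐ x ∂(volume.restrict (closure Ω)ᶜ), Nneu N s Ω u x = 0

/-- The first nontrivial Neumann eigenvalue `μ₁^{(s)}(Ω)`. -/
def mu1 (N : ℕ) (s : ℝ) (Ω : Set (Euc N)) : ℝ :=
  sInf {t : ℝ | ∃ u : Euc N → ℝ, memHs N s Ω u ∧ (∫ x in Ω, (u x) ^ 2) = 1 ∧
    (∫ x in Ω, u x) = 0 ∧ t = cNs N s / 2 * (semiSq N s Ω u).toReal}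

/-- The bilinear form (without the constant). -/
def bform (N : ℕ) (s : ℝ) (Ω : Set (Euc N)) (u v : Euc N → ℝ) : ℝ :=
  ∫ q in reg N Ω, (u q.1 - u q.2) * (v q.1 - v q.2) / kern N s q.1 q.2

/-- First nontrivial eigenfunction: weak solution associated to `μ₁^{(s)}(Ω)`. -/
def IsFirstEigen (N : ℕ) (s : ℝ) (Ω : Set (Euc N)) (u : Euc N → ℝ) : Prop :=
  memHs N s Ω u ∧ ¬ (u =ᵐ[volume.restrict Ω] 0) ∧ (∫ x in Ω, u x) = 0 ∧
    ∀ v : Euc N → ℝ, memHs N s Ω v →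
      cNs N s / 2 * bform N s Ω u v = mu1 N s Ω * ∫ x in Ω, u x * v x

/-- Reflection `σ_e(x) = x - 2(x·e)e` across the hyperplane `{x·e = 0}`. -/
def reflect (N : ℕ) (e x : Euc N) : Euc N := x - (2 * (inner ℝ x e : ℝ)) • e

/-- The polarization `P_e u` with respect to the hyperplane `{x·e = 0}`. -/
def polarize (N : ℕ) (e : Euc N) (u : Euc N → ℝ) (x : Euc N) : ℝ :=
  if 0 ≤ (inner ℝ x e : ℝ) then min (u x) (u (reflect N e x))
  else max (u x) (u (reflect N e x))

/-- Foliated Schwarz symmetry with respect to `p`. -/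
def FoliatedSchwarz (N : ℕ) (p : Euc N) (u : Euc N → ℝ) : Prop :=
  ∃ uh : ℝ → ℝ → ℝ, (∀ r : ℝ, AntitoneOn (uh r) (Icc 0 Real.pi)) ∧
    ∀ x : Euc N, x ≠ 0 → u x = uh ‖x‖ (Real.arccos ((inner ℝ x p : ℝ) / ‖x‖))

/-- Radial symmetry (pointwise). -/
def Radial (N : ℕ) (u : Euc N → ℝ) : Prop := ∃ f : ℝ → ℝ, ∀ x, u x = f ‖x‖

/-- Radial symmetry (a.e.). -/
def RadialAE (N : ℕ) (u : Euc N → ℝ) : Prop :=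
  ∃ f : ℝ → ℝ, ∀ᵐ x : Euc N ∂volume, u x = f ‖x‖

/-- The set `{x ∈ Ω : u x ≠ 0}` has exactly two connected components. -/
def TwoNodal (N : ℕ) (Ω : Set (Euc N)) (u : Euc N → ℝ) : Prop :=
  Nat.card (ConnectedComponents {x : Euc N // x ∈ Ω ∧ u x ≠ 0}) = 2

/-- Bounded Lipschitz domain: open, bounded, connected, and near every boundary point the set
is the region above the graph of a Lipschitz function in some direction `e`. -/
def IsLipschitzDomain (N : ℕ) (Ω : Set (Euc N)) : Prop :=
  IsOpen Ω ∧ IsBounded Ω ∧ IsConnected Ω ∧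
    ∀ x ∈ frontier Ω, ∃ e : Euc N, ‖e‖ = 1 ∧ ∃ r : ℝ, 0 < r ∧
      ∃ (L : NNReal) (f : Euc N → ℝ), LipschitzWith L f ∧
        ∀ y ∈ Metric.ball x r,
          (y ∈ Ω ↔ f (y - ((inner ℝ y e : ℝ)) • e) < (inner ℝ y e : ℝ))

/-- `g` is a weak gradient of `u` in `Ω`, square-integrable on `Ω`. -/
def IsWeakGradient (N : ℕ) (Ω : Set (Euc N)) (u : Euc N → ℝ) (g : Euc N → Euc N) : Prop :=
  Measurable g ∧ (∫⁻ x in Ω, ENNReal.ofReal (‖g x‖ ^ 2)) < ⊤ ∧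
    ∀ φ : Euc N → ℝ, ContDiff ℝ (⊤ : ℕ∞) φ → HasCompactSupport φ → tsupport φ ⊆ Ω →
      ∀ i : Fin N, (∫ x in Ω, u x * fderiv ℝ φ x (EuclideanSpace.single i 1)) =
        - ∫ x in Ω, g x i * φ x

/-- Membership in `H¹(Ω)`. -/
def memH1 (N : ℕ) (Ω : Set (Euc N)) (u : Euc N → ℝ) : Prop :=
  Measurable u ∧ l2sq N Ω u < ⊤ ∧ ∃ g, IsWeakGradient N Ω u g

/-- `∫_Ω |∇u|²`, as an extended real number. -/
def gradSq (N : ℕ) (Ω : Set (Euc N)) (u : Euc N → ℝ) : ℝ≥0∞ :=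
  ⨅ (g : Euc N → Euc N) (_ : IsWeakGradient N Ω u g), ∫⁻ x in Ω, ENNReal.ofReal (‖g x‖ ^ 2)

/-- Rayleigh quotient for the fractional Neumann problem. -/
def rayleighS (N : ℕ) (s : ℝ) (Ω : Set (Euc N)) (u : Euc N → ℝ) : ℝ≥0∞ :=
  ENNReal.ofReal (cNs N s / 2) * semiSq N s Ω u / l2sq N Ω u

/-- Rayleigh quotient for the local Neumann problem. -/
def rayleigh1 (N : ℕ) (Ω : Set (Euc N)) (u : Euc N → ℝ) : ℝ≥0∞ :=
  gradSq N Ω u / l2sq N Ω u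

/-- The min-max value `μ_n^{(s)}(Ω)` over `n`-dimensional subspaces of `H^s_{Ω,0} ∩ L²₀(Ω)`. -/
def muNs (N : ℕ) (s : ℝ) (Ω : Set (Euc N)) (n : ℕ) : ℝ≥0∞ :=
  ⨅ (A : Submodule ℝ (Euc N → ℝ)) (_ : Module.finrank ℝ A = n ∧
      (∀ u ∈ A, memHs N s Ω u ∧ (∫ x in Ω, u x) = 0) ∧
      (∀ u ∈ A, u =ᵐ[(volume : Measure (Euc N))] 0 → u = 0)),
    ⨆ (u : Euc N → ℝ) (_ : u ∈ A ∧ u ≠ 0), rayleighS N s Ω u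

/-- The min-max value over `n`-dimensional subspaces of `H̃^s_{Ω,0} ∩ L²₀(Ω)`. -/
def muNsTilde (N : ℕ) (s : ℝ) (Ω : Set (Euc N)) (n : ℕ) : ℝ≥0∞ :=
  ⨅ (A : Submodule ℝ (Euc N → ℝ)) (_ : Module.finrank ℝ A = n ∧
      (∀ u ∈ A, memHsTilde N s Ω u ∧ (∫ x in Ω, u x) = 0) ∧
      (∀ u ∈ A, u =ᵐ[(volume : Measure (Euc N))] 0 → u = 0)),
    ⨆ (u : Euc N → ℝ) (_ : u ∈ A ∧ u ≠ 0), rayleighS N s Ω u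

/-- The min-max value `μ_n^{(1)}(Ω)` over `n`-dimensional subspaces of `H¹(Ω) ∩ L²₀(Ω)`. -/
def muN1 (N : ℕ) (Ω : Set (Euc N)) (n : ℕ) : ℝ≥0∞ :=
  ⨅ (A : Submodule ℝ (Euc N → ℝ)) (_ : Module.finrank ℝ A = n ∧
      (∀ u ∈ A, memH1 N Ω u ∧ (∫ x in Ω, u x) = 0) ∧
      (∀ u ∈ A, u =ᵐ[volume.restrict Ω] 0 → u = 0)),
    ⨆ (u : Euc N → ℝ) (_ : u ∈ A ∧ u ≠ 0), rayleigh1 N Ω u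

/-- `μ_n^{(s)}(Ω)` including `μ₀^{(s)}(Ω) := 0`. -/
def muNsFull (N : ℕ) (s : ℝ) (Ω : Set (Euc N)) (n : ℕ) : ℝ≥0∞ :=
  if n = 0 then 0 else muNs N s Ω n

/-- `μ_n^{(1)}(Ω)` including `μ₀^{(1)}(Ω) := 0`. -/
def muN1Full (N : ℕ) (Ω : Set (Euc N)) (n : ℕ) : ℝ≥0∞ :=
  if n = 0 then 0 else muN1 N Ω n

/-- The squared `H^s_{Ω,0}`-seminorm of the `s`-minimal extension of `u`:
the minimal value of `[v]²` over `v ∈ H^s_{Ω,0}` with `v = u` a.e. in `Ω`. -/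
def minExtSemiSq (N : ℕ) (s : ℝ) (Ω : Set (Euc N)) (u : Euc N → ℝ) : ℝ≥0∞ :=
  ⨅ (v : Euc N → ℝ) (_ : memHs N s Ω v ∧ v =ᵐ[volume.restrict Ω] u), semiSq N s Ω v

/-- `ω_{N-1}`: volume of the unit ball of `ℝ^{N-1}`. -/
def omegaPrev (N : ℕ) : ℝ := (volume (Metric.ball (0 : Euc (N - 1)) 1)).toReal

/-- Membership in `L²₀(Ω)`. -/
def memL20 (N : ℕ) (Ω : Set (Euc N)) (u : Euc N → ℝ) : Prop :=
  Measurable u ∧ l2sq N Ω u < ⊤ ∧ (∫ x in Ω, u x) = 0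

/-- The functional `F_s` (value `+∞` outside `H^s(Ω)`). -/
def Fs (N : ℕ) (s : ℝ) (Ω : Set (Euc N)) (u : Euc N → ℝ) : ℝ≥0∞ :=
  ENNReal.ofReal (1 - s) * minExtSemiSq N s Ω u

/-- The functional `F₁` (value `+∞` outside `H¹(Ω)`). -/
def F1 (N : ℕ) (Ω : Set (Euc N)) (u : Euc N → ℝ) : ℝ≥0∞ :=
  ENNReal.ofReal (omegaPrev N / (2 * N)) * gradSq N Ω u

end FracNeumann
namespace FracNeumann

/-! Let `w` be an even weak solution for `μ₁` on a domain invariant under all linear isometries,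
and let `σ_e` be the reflection across `eᗮ`. Then `v := w ∘ σ_e - w` is an even weak solution which
is antisymmetric across `eᗮ`. Replacing `v` by `|v|` on the half-space `{x | 0 < ⟪x, e⟫}`, extended
antisymmetrically, decreases the energy strictly if `v` changes sign on that half-space, so
minimality of `μ₁` forces `v` to have a sign there. But `-σ_e` preserves the half-space and turns
`v` into `-v`, hence `v = 0`. As `e` is arbitrary, `w` is invariant under all reflections and
therefore radial.

A function that is foliated Schwarz symmetric with respect to `p` satisfies `u (σ_p x) = u (-x)`,
because `σ_p x` and `-x` have the same norm and the same inner product with `p`. So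
`u + u ∘ σ_p` is the even function `w x = u x + u (-x)`, which is nonzero unless `u` is
antisymmetric with respect to `pᗮ`.
-/

section Reflection

variable {F : Type*} [NormedAddCommGroup F] [InnerProductSpace ℝ F]

lemma inner_reflection_self (e x : F) :
    inner ℝ ((ℝ ∙ e)ᗮ.reflection x) e = -inner ℝ x e := by
  have h := (ℝ ∙ e)ᗮ.reflection.inner_map_map x e
  rw [Submodule.reflection_orthogonalComplement_singleton_eq_neg, inner_neg_right] at h
  linarith

lemma reflection_eq_self_of_inner_eq_zero {e x : F} (h : inner ℝ x e = 0) :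
    (ℝ ∙ e)ᗮ.reflection x = x :=
  Submodule.reflection_mem_subspace_eq_self
    (Submodule.mem_orthogonal_singleton_iff_inner_left.2 h)

lemma norm_sub_reflection_sq (e x y : F) :
    ‖x - (ℝ ∙ e)ᗮ.reflection y‖ ^ 2 =
      ‖x - y‖ ^ 2 + 4 * (inner ℝ x e * inner ℝ y e) / ‖e‖ ^ 2 := by
  rw [norm_sub_sq_real, norm_sub_sq_real, LinearIsometryEquiv.norm_map,
    Submodule.reflection_orthogonal_apply, Submodule.reflection_singleton_apply]
  simp only [neg_sub, inner_sub_right, inner_smul_right, two_smul, inner_add_right,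
    RCLike.ofReal_real_eq_id, id, real_inner_comm y e]
  ring

lemma norm_sub_lt_norm_sub_reflection {e x y : F} (h : 0 < inner ℝ x e * inner ℝ y e) :
    ‖x - y‖ < ‖x - (ℝ ∙ e)ᗮ.reflection y‖ := by
  have he : e ≠ 0 := by
    rintro rfl
    simp at h
  refine lt_of_pow_lt_pow_left₀ 2 (norm_nonneg _) ?_
  rw [norm_sub_reflection_sq]
  exact lt_add_of_pos_right _ (by positivity)

/-- Antisymmetry of `v` with respect to the hyperplane orthogonal to `e`. The vector `e` need not
be normalized. -/
def AntisymmetricAcross (e : F) (v : F → ℝ) : Prop :=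
  ∀ x, v ((ℝ ∙ e)ᗮ.reflection x) = -v x

lemma AntisymmetricAcross.eq_zero_of_inner_eq_zero {e : F} {v : F → ℝ}
    (hv : AntisymmetricAcross e v) {x : F} (h : inner ℝ x e = 0) : v x = 0 := by
  have := hv x
  rw [reflection_eq_self_of_inner_eq_zero h] at this
  linarith

/-- The rearrangement of an antisymmetric function which has the same absolute value and is
nonnegative on the half-space `{x | 0 < ⟪x, e⟫}`; up to sign, this is its polarization. -/
def signRearrangement (e : F) (v : F → ℝ) (x : F) : ℝ :=
  SignType.sign (inner ℝ x e : ℝ) * |v x|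

lemma antisymmetricAcross_signRearrangement {e : F} {v : F → ℝ} (hv : AntisymmetricAcross e v) :
    AntisymmetricAcross e (signRearrangement e v) := by
  intro x
  simp only [signRearrangement, inner_reflection_self, hv x, Left.sign_neg, SignType.coe_neg,
    abs_neg, neg_mul]

lemma signRearrangement_mul (e : F) (v : F → ℝ) (x y : F) :
    signRearrangement e v x * signRearrangement e v y =
      SignType.sign (inner ℝ x e * inner ℝ y e : ℝ) * |v x * v y| := by
  simp only [signRearrangement, sign_mul, SignType.coe_mul, abs_mul]
  ring

lemma AntisymmetricAcross.signRearrangement_sq {e : F} {v : F → ℝ}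
    (hv : AntisymmetricAcross e v) (x : F) : signRearrangement e v x ^ 2 = v x ^ 2 := by
  rw [pow_two, signRearrangement_mul, pow_two]
  by_cases h : (inner ℝ x e : ℝ) = 0
  · simp [hv.eq_zero_of_inner_eq_zero h]
  · rw [sign_pos (mul_self_pos.2 h), SignType.coe_one, one_mul, abs_mul_self]

lemma measurable_signRearrangement [MeasurableSpace F] [BorelSpace F]
    (e : F) {v : F → ℝ} (hv : Measurable v) : Measurable (signRearrangement e v) := by
  have hsign : Monotone fun r : ℝ => (SignType.sign r : ℝ) := by
    have hcast : Monotone (SignType.cast : SignType → ℝ) := by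
      rintro (_ | _ | _) (_ | _ | _) h <;> simp_all
    exact hcast.comp SignType.sign.monotone
  exact (hsign.measurable.comp (by fun_prop : Continuous fun x : F => inner ℝ x e).measurable).mul
    (continuous_abs.measurable.comp hv)

end Reflection

section SobolevSpace

variable {N : ℕ} {s : ℝ} {Ω : Set (Euc N)} {u v w : Euc N → ℝ}

lemma kern_nonneg (N : ℕ) (s : ℝ) (x y : Euc N) : 0 ≤ kern N s x y :=
  Real.rpow_nonneg (norm_nonneg _) _

lemma kern_pos {x y : Euc N} (h : x ≠ y) : 0 < kern N s x y :=
  Real.rpow_pos_of_pos (norm_sub_pos_iff.2 h) _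

/-- The difference quotient `(u(x) - u(y)) / |x - y|^{(N + 2s) / 2}`, whose `L²` norm is the
Gagliardo seminorm of `u`. -/
def diffQuotient (N : ℕ) (s : ℝ) (u : Euc N → ℝ) (q : Euc N × Euc N) : ℝ :=
  (u q.1 - u q.2) / √(kern N s q.1 q.2)

lemma diffQuotient_mul (u v : Euc N → ℝ) (q : Euc N × Euc N) :
    diffQuotient N s u q * diffQuotient N s v q =
      (u q.1 - u q.2) * (v q.1 - v q.2) / kern N s q.1 q.2 := by
  rw [diffQuotient, diffQuotient, div_mul_div_comm, Real.mul_self_sqrt (kern_nonneg N s _ _)]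

lemma diffQuotient_sq (u : Euc N → ℝ) (q : Euc N × Euc N) :
    diffQuotient N s u q ^ 2 = (u q.1 - u q.2) ^ 2 / kern N s q.1 q.2 := by
  rw [pow_two, diffQuotient_mul, ← pow_two]

lemma diffQuotient_add (u v : Euc N → ℝ) :
    diffQuotient N s (u + v) = diffQuotient N s u + diffQuotient N s v := by
  ext q
  simp only [diffQuotient, Pi.add_apply]
  ring

lemma diffQuotient_smul (c : ℝ) (u : Euc N → ℝ) :
    diffQuotient N s (c • u) = c • diffQuotient N s u := by
  ext q
  simp only [diffQuotient, Pi.smul_apply, smul_eq_mul]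
  ring

lemma measurable_diffQuotient (hu : Measurable u) : Measurable (diffQuotient N s u) :=
  ((hu.comp measurable_fst).sub (hu.comp measurable_snd)).div
    ((measurable_fst.sub measurable_snd).norm.pow_const _).sqrt

lemma semiSq_eq_lintegral_diffQuotient (u : Euc N → ℝ) :
    semiSq N s Ω u = ∫⁻ q in reg N Ω, ENNReal.ofReal (diffQuotient N s u q ^ 2) := by
  simp only [semiSq, diffQuotient_sq]

lemma bform_eq_integral_diffQuotient (u v : Euc N → ℝ) :
    bform N s Ω u v = ∫ q in reg N Ω, diffQuotient N s u q * diffQuotient N s v q := by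
  simp only [bform, diffQuotient_mul]

lemma lintegral_ofReal_sq_lt_top_iff_memLp {α : Type*} [MeasurableSpace α] {μ : Measure α}
    {f : α → ℝ} (hf : AEStronglyMeasurable f μ) :
    ∫⁻ a, ENNReal.ofReal (f a ^ 2) ∂μ < ⊤ ↔ MemLp f 2 μ := by
  rw [memLp_two_iff_integrable_sq hf, lt_top_iff_ne_top,
    lintegral_ofReal_ne_top_iff_integrable (f := fun a => f a ^ 2) (hf.pow 2)
      (ae_of_all _ fun _ => sq_nonneg _)]

lemma memHs_iff_memLp : memHs N s Ω u ↔ Measurable u ∧ MemLp u 2 (volume.restrict Ω) ∧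
    MemLp (diffQuotient N s u) 2 (volume.restrict (reg N Ω)) := by
  rw [memHs, and_congr_right_iff]
  intro hu
  rw [semiSq_eq_lintegral_diffQuotient, l2sq,
    lintegral_ofReal_sq_lt_top_iff_memLp hu.aestronglyMeasurable,
    lintegral_ofReal_sq_lt_top_iff_memLp (measurable_diffQuotient hu).aestronglyMeasurable]

lemma memHs.measurable (hu : memHs N s Ω u) : Measurable u := hu.1

lemma memHs.memLp (hu : memHs N s Ω u) : MemLp u 2 (volume.restrict Ω) :=
  (memHs_iff_memLp.1 hu).2.1

lemma memHs.memLp_diffQuotient (hu : memHs N s Ω u) :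
    MemLp (diffQuotient N s u) 2 (volume.restrict (reg N Ω)) :=
  (memHs_iff_memLp.1 hu).2.2

lemma memHs.semiSq_ne_top (hu : memHs N s Ω u) : semiSq N s Ω u ≠ ⊤ := hu.2.2.ne

lemma memHs.add (hu : memHs N s Ω u) (hv : memHs N s Ω v) : memHs N s Ω (u + v) :=
  memHs_iff_memLp.2 ⟨hu.measurable.add hv.measurable, hu.memLp.add hv.memLp,
    diffQuotient_add u v ▸ hu.memLp_diffQuotient.add hv.memLp_diffQuotient⟩

lemma memHs.smul (hu : memHs N s Ω u) (c : ℝ) : memHs N s Ω (c • u) :=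
  memHs_iff_memLp.2 ⟨hu.measurable.const_smul c, hu.memLp.const_smul c,
    diffQuotient_smul c u ▸ hu.memLp_diffQuotient.const_smul c⟩

lemma memHs.integrable (hu : memHs N s Ω u) (hΩ : volume Ω ≠ ⊤) : IntegrableOn u Ω :=
  have : IsFiniteMeasure (volume.restrict Ω) := isFiniteMeasure_restrict.2 hΩ
  hu.memLp.integrable one_le_two

lemma memHs.integrable_mul (hu : memHs N s Ω u) (hv : memHs N s Ω v) :
    IntegrableOn (fun x => u x * v x) Ω :=
  hu.memLp.integrable_mul hv.memLp

lemma bform_add_left (hu : memHs N s Ω u) (hv : memHs N s Ω v) (hw : memHs N s Ω w) :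
    bform N s Ω (u + v) w = bform N s Ω u w + bform N s Ω v w := by
  simp only [bform_eq_integral_diffQuotient, diffQuotient_add, Pi.add_apply, add_mul]
  exact integral_add (hu.memLp_diffQuotient.integrable_mul hw.memLp_diffQuotient)
    (hv.memLp_diffQuotient.integrable_mul hw.memLp_diffQuotient)

lemma bform_smul_left (c : ℝ) (u v : Euc N → ℝ) :
    bform N s Ω (c • u) v = c * bform N s Ω u v := by
  simp only [bform_eq_integral_diffQuotient, diffQuotient_smul, Pi.smul_apply, smul_eq_mul,
    mul_assoc, integral_const_mul]

lemma bform_self (hu : Measurable u) : bform N s Ω u u = (semiSq N s Ω u).toReal := by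
  simp only [bform_eq_integral_diffQuotient, semiSq_eq_lintegral_diffQuotient, ← pow_two]
  exact integral_eq_lintegral_of_nonneg_ae (ae_of_all _ fun _ => sq_nonneg _)
    ((measurable_diffQuotient hu).pow_const 2).aestronglyMeasurable

lemma semiSq_smul (c : ℝ) (u : Euc N → ℝ) :
    semiSq N s Ω (c • u) = ENNReal.ofReal (c ^ 2) * semiSq N s Ω u := by
  simp only [semiSq_eq_lintegral_diffQuotient, diffQuotient_smul, Pi.smul_apply, smul_eq_mul,
    mul_pow, ENNReal.ofReal_mul (sq_nonneg c)]
  exact lintegral_const_mul' _ _ ENNReal.ofReal_ne_top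

lemma cNs_pos (N : ℕ) (hs : s ∈ Ioo 0 1) : 0 < cNs N s := by
  obtain ⟨hs0, hs1⟩ := hs
  exact div_pos (mul_pos (by positivity) (Real.Gamma_pos_of_pos (by positivity)))
    (mul_pos (by positivity) (Real.Gamma_pos_of_pos (sub_pos.2 hs1)))

lemma mu1_mul_integral_sq_le (hs : s ∈ Ioo 0 1) (hu : memHs N s Ω u)
    (hmean : ∫ x in Ω, u x = 0) :
    mu1 N s Ω * ∫ x in Ω, u x ^ 2 ≤ cNs N s / 2 * (semiSq N s Ω u).toReal := by
  have hc := cNs_pos N hs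
  have hI0 : 0 ≤ ∫ x in Ω, u x ^ 2 := integral_nonneg fun x => sq_nonneg (u x)
  set I := ∫ x in Ω, u x ^ 2
  obtain hI' | hI' := hI0.eq_or_lt
  · rw [← hI', mul_zero]
    positivity
  have hsq : (√I)⁻¹ ^ 2 = I⁻¹ := by rw [inv_pow, Real.sq_sqrt hI0]
  have hle : mu1 N s Ω ≤ cNs N s / 2 * (semiSq N s Ω ((√I)⁻¹ • u)).toReal := by
    refine csInf_le ⟨0, ?_⟩ ⟨_, hu.smul _, ?_, ?_, rfl⟩
    · rintro t ⟨v, -, -, -, rfl⟩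
      positivity
    · simp only [Pi.smul_apply, smul_eq_mul, mul_pow, integral_const_mul, hsq]
      exact inv_mul_cancel₀ hI'.ne'
    · simp only [Pi.smul_apply, smul_eq_mul, integral_const_mul, hmean, mul_zero]
  rw [semiSq_smul, hsq, ENNReal.toReal_mul, ENNReal.toReal_ofReal (inv_nonneg.2 hI0)] at hle
  calc mu1 N s Ω * I ≤ cNs N s / 2 * (I⁻¹ * (semiSq N s Ω u).toReal) * I := by gcongr
    _ = cNs N s / 2 * (semiSq N s Ω u).toReal := by field_simp

end SobolevSpace

section Isometry

variable {N : ℕ} {s : ℝ} {Ω : Set (Euc N)} {u v : Euc N → ℝ} {ρ τ : Euc N ≃ₗᵢ[ℝ] Euc N}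

lemma kern_map (ρ : Euc N ≃ₗᵢ[ℝ] Euc N) (x y : Euc N) :
    kern N s (ρ x) (ρ y) = kern N s x y := by
  rw [kern, kern, ← map_sub, ρ.norm_map]

lemma diffQuotient_comp (ρ : Euc N ≃ₗᵢ[ℝ] Euc N) (u : Euc N → ℝ) (q : Euc N × Euc N) :
    diffQuotient N s (u ∘ ρ) q = diffQuotient N s u (Prod.map ρ ρ q) := by
  simp only [diffQuotient, Function.comp_apply, Prod.map_fst, Prod.map_snd, kern_map]

lemma preimage_symm_eq (hρ : ρ ⁻¹' Ω = Ω) : ρ.symm ⁻¹' Ω = Ω := by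
  conv_lhs => rw [← hρ]
  ext x
  simp

lemma preimage_reg (hρ : ρ ⁻¹' Ω = Ω) (hτ : τ ⁻¹' Ω = Ω) :
    Prod.map ρ τ ⁻¹' reg N Ω = reg N Ω := by
  have hρ' : ρ ⁻¹' closure Ω = closure Ω := by
    rw [← ρ.coe_toHomeomorph, Homeomorph.preimage_closure, ρ.coe_toHomeomorph, hρ]
  have hτ' : τ ⁻¹' closure Ω = closure Ω := by
    rw [← τ.coe_toHomeomorph, Homeomorph.preimage_closure, τ.coe_toHomeomorph, hτ]
  ext q
  exact or_congr (Set.ext_iff.1 hρ' q.1) (Set.ext_iff.1 hτ' q.2)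

lemma measurableEmbedding_isometry (ρ : Euc N ≃ₗᵢ[ℝ] Euc N) : MeasurableEmbedding ρ :=
  ρ.toHomeomorph.measurableEmbedding

lemma measurePreserving_restrict (hρ : ρ ⁻¹' Ω = Ω) :
    MeasurePreserving ρ (volume.restrict Ω) (volume.restrict Ω) := by
  simpa only [hρ] using ρ.measurePreserving.restrict_preimage_emb (measurableEmbedding_isometry ρ) Ω

lemma measurePreserving_restrict_reg (hρ : ρ ⁻¹' Ω = Ω) (hτ : τ ⁻¹' Ω = Ω) :
    MeasurePreserving (Prod.map ρ τ) (volume.restrict (reg N Ω)) (volume.restrict (reg N Ω)) := by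
  have h := (ρ.measurePreserving.prod τ.measurePreserving).restrict_preimage_emb
    ((measurableEmbedding_isometry ρ).prodMap (measurableEmbedding_isometry τ)) (reg N Ω)
  rwa [preimage_reg hρ hτ] at h

lemma memHs.comp (hρ : ρ ⁻¹' Ω = Ω) (hu : memHs N s Ω u) : memHs N s Ω (u ∘ ρ) := by
  refine memHs_iff_memLp.2 ⟨hu.measurable.comp ρ.continuous.measurable,
    hu.memLp.comp_measurePreserving (measurePreserving_restrict hρ), ?_⟩
  simpa only [Function.comp_def, ← diffQuotient_comp] using
    hu.memLp_diffQuotient.comp_measurePreserving (measurePreserving_restrict_reg hρ hρ)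

lemma bform_comp_left (hρ : ρ ⁻¹' Ω = Ω) (u v : Euc N → ℝ) :
    bform N s Ω (u ∘ ρ) v = bform N s Ω u (v ∘ ρ.symm) := by
  have hemb := (measurableEmbedding_isometry ρ).prodMap (measurableEmbedding_isometry ρ)
  have hv : (v ∘ ρ.symm) ∘ ρ = v := by
    ext x
    simp only [Function.comp_apply, ρ.symm_apply_apply]
  simp only [bform_eq_integral_diffQuotient]
  rw [← (measurePreserving_restrict_reg hρ hρ).integral_comp hemb
    fun q => diffQuotient N s u q * diffQuotient N s (v ∘ ρ.symm) q]
  simp only [← diffQuotient_comp, hv]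

end Isometry

section Rearrangement

variable {N : ℕ} {s : ℝ} {Ω : Set (Euc N)} {e x y : Euc N} {v : Euc N → ℝ}

/-- The Gagliardo energy density of `v` averaged, up to a factor `2`, over the reflection of the
second variable. For antisymmetric `v` this density, unlike the original one, decreases pointwise
under `signRearrangement`. -/
def reflectedEnergyDensity (N : ℕ) (s : ℝ) (e : Euc N) (v : Euc N → ℝ) (q : Euc N × Euc N) : ℝ :=
  diffQuotient N s v q ^ 2 + diffQuotient N s v (q.1, (ℝ ∙ e)ᗮ.reflection q.2) ^ 2

lemma reflectedEnergyDensity_nonneg (e : Euc N) (v : Euc N → ℝ) (q : Euc N × Euc N) :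
    0 ≤ reflectedEnergyDensity N s e v q :=
  add_nonneg (sq_nonneg _) (sq_nonneg _)

lemma reflectedEnergyDensity_reflection_right (e : Euc N) (v : Euc N → ℝ) (x y : Euc N) :
    reflectedEnergyDensity N s e v (x, (ℝ ∙ e)ᗮ.reflection y) =
      reflectedEnergyDensity N s e v (x, y) := by
  rw [reflectedEnergyDensity, reflectedEnergyDensity, Submodule.reflection_reflection, add_comm]

lemma measurable_reflectedEnergyDensity (e : Euc N) (hv : Measurable v) :
    Measurable (reflectedEnergyDensity N s e v) :=
  ((measurable_diffQuotient hv).pow_const 2).add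
    (((measurable_diffQuotient hv).comp (measurable_fst.prodMk
      ((ℝ ∙ e)ᗮ.reflection.continuous.measurable.comp measurable_snd))).pow_const 2)

lemma lintegral_reflectedEnergyDensity (hΩ : (ℝ ∙ e)ᗮ.reflection ⁻¹' Ω = Ω) (hv : Measurable v) :
    ∫⁻ q in reg N Ω, ENNReal.ofReal (reflectedEnergyDensity N s e v q) = 2 * semiSq N s Ω v := by
  have hmeas : Measurable fun q => ENNReal.ofReal (diffQuotient N s v q ^ 2) :=
    ((measurable_diffQuotient hv).pow_const 2).ennreal_ofReal
  have hrefl := (measurePreserving_restrict_reg (ρ := .refl ℝ (Euc N)) (preimage_id (s := Ω))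
    hΩ).lintegral_comp hmeas
  simp only [reflectedEnergyDensity, ENNReal.ofReal_add (sq_nonneg _) (sq_nonneg _)]
  rw [lintegral_add_left hmeas, two_mul, semiSq_eq_lintegral_diffQuotient]
  exact congrArg _ hrefl

lemma AntisymmetricAcross.reflectedEnergyDensity_eq (hv : AntisymmetricAcross e v) (x y : Euc N) :
    reflectedEnergyDensity N s e v (x, y) =
      (v x - v y) ^ 2 / kern N s x y + (v x + v y) ^ 2 / kern N s x ((ℝ ∙ e)ᗮ.reflection y) := by
  rw [reflectedEnergyDensity, diffQuotient_sq, diffQuotient_sq, hv y, sub_neg_eq_add]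

lemma AntisymmetricAcross.reflectedEnergyDensity_sub (hv : AntisymmetricAcross e v)
    (x y : Euc N) :
    reflectedEnergyDensity N s e v (x, y) -
        reflectedEnergyDensity N s e (signRearrangement e v) (x, y) =
      2 * (signRearrangement e v x * signRearrangement e v y - v x * v y) *
        ((kern N s x y)⁻¹ - (kern N s x ((ℝ ∙ e)ᗮ.reflection y))⁻¹) := by
  rw [hv.reflectedEnergyDensity_eq,
    (antisymmetricAcross_signRearrangement hv).reflectedEnergyDensity_eq]
  linear_combination (-(kern N s x y)⁻¹ - (kern N s x ((ℝ ∙ e)ᗮ.reflection y))⁻¹) *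
    (hv.signRearrangement_sq x + hv.signRearrangement_sq y)

lemma inv_kern_reflection_lt (hs : 0 < s) (hxy : x ≠ y) (h : 0 < inner ℝ x e * inner ℝ y e) :
    (kern N s x ((ℝ ∙ e)ᗮ.reflection y))⁻¹ < (kern N s x y)⁻¹ :=
  inv_strictAnti₀ (kern_pos hxy) <|
    Real.rpow_lt_rpow (norm_nonneg _) (norm_sub_lt_norm_sub_reflection h) (by positivity)

lemma AntisymmetricAcross.reflectedEnergyDensity_signRearrangement_le_of_pos (hs : 0 < s)
    (hv : AntisymmetricAcross e v) (h : 0 < inner ℝ x e * inner ℝ y e) :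
    reflectedEnergyDensity N s e (signRearrangement e v) (x, y) ≤
      reflectedEnergyDensity N s e v (x, y) := by
  rw [← sub_nonneg, hv.reflectedEnergyDensity_sub, signRearrangement_mul, sign_pos h,
    SignType.coe_one, one_mul]
  obtain rfl | hxy := eq_or_ne x y
  · simp
  have hprod : 0 ≤ |v x * v y| - v x * v y := sub_nonneg.2 (le_abs_self _)
  have hkern := sub_pos.2 (inv_kern_reflection_lt hs hxy h)
  positivity

lemma AntisymmetricAcross.reflectedEnergyDensity_signRearrangement_lt (hs : 0 < s)
    (hv : AntisymmetricAcross e v) (h : 0 < inner ℝ x e * inner ℝ y e) (hxy : v x * v y < 0) :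
    reflectedEnergyDensity N s e (signRearrangement e v) (x, y) <
      reflectedEnergyDensity N s e v (x, y) := by
  rw [← sub_pos, hv.reflectedEnergyDensity_sub, signRearrangement_mul, sign_pos h,
    SignType.coe_one, one_mul]
  have hne : x ≠ y := by
    rintro rfl
    exact hxy.not_ge (mul_self_nonneg _)
  have hprod : 0 < |v x * v y| - v x * v y := sub_pos.2 (hxy.trans_le (abs_nonneg _))
  have hkern := sub_pos.2 (inv_kern_reflection_lt hs hne h)
  positivity

lemma AntisymmetricAcross.reflectedEnergyDensity_signRearrangement_le (hs : 0 < s)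
    (hv : AntisymmetricAcross e v) (q : Euc N × Euc N) :
    reflectedEnergyDensity N s e (signRearrangement e v) q ≤ reflectedEnergyDensity N s e v q := by
  obtain ⟨x, y⟩ := q
  obtain h | h | h := lt_trichotomy (inner ℝ x e * inner ℝ y e : ℝ) 0
  · rw [← reflectedEnergyDensity_reflection_right e _ x y,
      ← reflectedEnergyDensity_reflection_right e v x y]
    refine hv.reflectedEnergyDensity_signRearrangement_le_of_pos hs ?_
    rwa [inner_reflection_self, mul_neg, neg_pos]
  · have hvxy : v x * v y = 0 := mul_eq_zero.2 <| (mul_eq_zero.1 h).imp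
      hv.eq_zero_of_inner_eq_zero hv.eq_zero_of_inner_eq_zero
    rw [← sub_nonneg, hv.reflectedEnergyDensity_sub, signRearrangement_mul, hvxy, abs_zero,
      mul_zero, sub_zero, mul_zero, zero_mul]
  · exact hv.reflectedEnergyDensity_signRearrangement_le_of_pos hs h

lemma AntisymmetricAcross.semiSq_signRearrangement_le (hs : 0 < s)
    (hΩ : (ℝ ∙ e)ᗮ.reflection ⁻¹' Ω = Ω) (hv : AntisymmetricAcross e v) (hvm : Measurable v) :
    semiSq N s Ω (signRearrangement e v) ≤ semiSq N s Ω v := by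
  rw [← ENNReal.mul_le_mul_iff_right two_ne_zero ENNReal.ofNat_ne_top,
    ← lintegral_reflectedEnergyDensity hΩ (measurable_signRearrangement e hvm),
    ← lintegral_reflectedEnergyDensity hΩ hvm]
  exact lintegral_mono fun q =>
    ENNReal.ofReal_le_ofReal (hv.reflectedEnergyDensity_signRearrangement_le hs q)

lemma AntisymmetricAcross.memHs_signRearrangement (hs : 0 < s)
    (hΩ : (ℝ ∙ e)ᗮ.reflection ⁻¹' Ω = Ω) (hv : AntisymmetricAcross e v) (hvHs : memHs N s Ω v) :
    memHs N s Ω (signRearrangement e v) := by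
  refine ⟨measurable_signRearrangement e hvHs.measurable, ?_,
    (hv.semiSq_signRearrangement_le hs hΩ hvHs.measurable).trans_lt hvHs.2.2⟩
  simpa only [l2sq, hv.signRearrangement_sq] using hvHs.2.1

lemma AntisymmetricAcross.setIntegral_eq_zero (hΩ : (ℝ ∙ e)ᗮ.reflection ⁻¹' Ω = Ω)
    (hv : AntisymmetricAcross e v) : ∫ x in Ω, v x = 0 := by
  have h := (measurePreserving_restrict hΩ).integral_comp (measurableEmbedding_isometry _) v
  simp only [hv _, integral_neg] at h
  linarith

lemma eq_empty_of_ae_restrict_of_forall_not {X : Type*} [TopologicalSpace X] [MeasurableSpace X]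
    [OpensMeasurableSpace X] {μ : Measure X} [μ.IsOpenPosMeasure] {U S : Set X} {P : X → Prop}
    (hU : IsOpen U) (hUS : U ⊆ S) (hP : ∀ᵐ x ∂μ.restrict S, P x) (hnot : ∀ x ∈ U, ¬ P x) :
    U = ∅ := by
  have h := (ae_restrict_iff' hU.measurableSet).1 (ae_restrict_of_ae_restrict_of_subset hUS hP)
  refine hU.eq_empty_of_measure_zero (measure_mono_null ?_ (ae_iff.1 h))
  exact fun x hx hPx => hnot x hx (hPx hx)

lemma AntisymmetricAcross.mul_nonneg_of_semiSq_le (hs : 0 < s) (hΩo : IsOpen Ω)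
    (hΩ : (ℝ ∙ e)ᗮ.reflection ⁻¹' Ω = Ω) (hv : AntisymmetricAcross e v) (hvc : Continuous v)
    (hvHs : memHs N s Ω v) (hle : semiSq N s Ω v ≤ semiSq N s Ω (signRearrangement e v))
    (hx : x ∈ Ω) (hxe : 0 < inner ℝ x e) (hye : 0 < inner ℝ y e) : 0 ≤ v x * v y := by
  have hzHs := hv.memHs_signRearrangement hs hΩ hvHs
  have hdensity : ∀ᵐ q ∂volume.restrict (reg N Ω),
      ENNReal.ofReal (reflectedEnergyDensity N s e (signRearrangement e v) q) =
        ENNReal.ofReal (reflectedEnergyDensity N s e v q) := by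
    refine ae_eq_of_ae_le_of_lintegral_le (ae_of_all _ fun q => ENNReal.ofReal_le_ofReal
      (hv.reflectedEnergyDensity_signRearrangement_le hs q)) ?_
      (measurable_reflectedEnergyDensity e hvHs.measurable).ennreal_ofReal.aemeasurable ?_
    · rw [lintegral_reflectedEnergyDensity hΩ hzHs.measurable]
      exact ENNReal.mul_ne_top ENNReal.ofNat_ne_top hzHs.semiSq_ne_top
    · rw [lintegral_reflectedEnergyDensity hΩ hzHs.measurable,
        lintegral_reflectedEnergyDensity hΩ hvHs.measurable]
      gcongr
  let U : Set (Euc N × Euc N) := {q | q.1 ∈ Ω ∧ 0 < inner ℝ q.1 e ∧ 0 < inner ℝ q.2 e ∧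
    v q.1 * v q.2 < 0}
  have hUo : IsOpen U :=
    (hΩo.preimage continuous_fst).and <|
      (isOpen_lt continuous_const (continuous_fst.inner continuous_const)).and <|
      (isOpen_lt continuous_const (continuous_snd.inner continuous_const)).and <|
      isOpen_lt ((hvc.comp continuous_fst).mul (hvc.comp continuous_snd)) continuous_const
  have hU : U = ∅ := eq_empty_of_ae_restrict_of_forall_not hUo
    (fun q hq => Or.inl (subset_closure hq.1)) hdensity fun q hq heq => by
      rw [ENNReal.ofReal_eq_ofReal_iff (reflectedEnergyDensity_nonneg _ _ _)
        (reflectedEnergyDensity_nonneg _ _ _)] at heq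
      exact (hv.reflectedEnergyDensity_signRearrangement_lt hs (mul_pos hq.2.1 hq.2.2.1)
        hq.2.2.2).ne heq
  by_contra! hneg
  exact eq_empty_iff_forall_notMem.1 hU (x, y) ⟨hx, hxe, hye, hneg⟩

end Rearrangement

section WeakSolution

variable {N : ℕ} {s : ℝ} {Ω : Set (Euc N)} {e x y : Euc N} {u v w : Euc N → ℝ}

/-- Weak solutions of the Neumann eigenvalue problem for `μ₁^{(s)}(Ω)`: the first nontrivial
eigenfunctions together with the zero function. -/
structure IsWeakSolution (N : ℕ) (s : ℝ) (Ω : Set (Euc N)) (u : Euc N → ℝ) : Prop where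
  memHs : memHs N s Ω u
  integral_eq_zero : ∫ x in Ω, u x = 0
  bform_eq : ∀ v : Euc N → ℝ, FracNeumann.memHs N s Ω v →
    cNs N s / 2 * bform N s Ω u v = mu1 N s Ω * ∫ x in Ω, u x * v x

lemma isFirstEigen_iff :
    IsFirstEigen N s Ω u ↔ IsWeakSolution N s Ω u ∧ ¬ u =ᵐ[volume.restrict Ω] 0 :=
  ⟨fun ⟨hHs, hne, hmean, heq⟩ => ⟨⟨hHs, hmean, heq⟩, hne⟩,
    fun ⟨hu, hne⟩ => ⟨hu.memHs, hne, hu.integral_eq_zero, hu.bform_eq⟩⟩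

namespace IsWeakSolution

lemma add (hΩ : volume Ω ≠ ⊤) (hu : IsWeakSolution N s Ω u) (hv : IsWeakSolution N s Ω v) :
    IsWeakSolution N s Ω (u + v) where
  memHs := hu.memHs.add hv.memHs
  integral_eq_zero := by
    rw [integral_add' (hu.memHs.integrable hΩ) (hv.memHs.integrable hΩ), hu.integral_eq_zero,
      hv.integral_eq_zero, add_zero]
  bform_eq w hw := by
    simp only [Pi.add_apply, add_mul]
    rw [bform_add_left hu.memHs hv.memHs hw, mul_add, hu.bform_eq w hw, hv.bform_eq w hw,
      integral_add (hu.memHs.integrable_mul hw) (hv.memHs.integrable_mul hw), mul_add]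

lemma smul (c : ℝ) (hu : IsWeakSolution N s Ω u) : IsWeakSolution N s Ω (c • u) where
  memHs := hu.memHs.smul c
  integral_eq_zero := by
    simp only [Pi.smul_apply, smul_eq_mul, integral_const_mul, hu.integral_eq_zero, mul_zero]
  bform_eq v hv := by
    simp only [bform_smul_left, Pi.smul_apply, smul_eq_mul, mul_assoc, integral_const_mul]
    rw [mul_left_comm, hu.bform_eq v hv, mul_left_comm]

lemma sub (hΩ : volume Ω ≠ ⊤) (hu : IsWeakSolution N s Ω u) (hv : IsWeakSolution N s Ω v) :
    IsWeakSolution N s Ω (u - v) := by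
  simpa only [neg_one_smul, ← sub_eq_add_neg] using hu.add hΩ (hv.smul (-1))

lemma comp {ρ : Euc N ≃ₗᵢ[ℝ] Euc N} (hρ : ρ ⁻¹' Ω = Ω) (hu : IsWeakSolution N s Ω u) :
    IsWeakSolution N s Ω (u ∘ ρ) where
  memHs := hu.memHs.comp hρ
  integral_eq_zero := by
    rw [← hu.integral_eq_zero]
    exact (measurePreserving_restrict hρ).integral_comp (measurableEmbedding_isometry ρ) u
  bform_eq v hv := by
    have hL2 := (measurePreserving_restrict hρ).integral_comp (measurableEmbedding_isometry ρ)
      fun x => u x * (v ∘ ρ.symm) x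
    simp only [Function.comp_apply, ρ.symm_apply_apply] at hL2 ⊢
    rw [bform_comp_left hρ, hu.bform_eq _ (hv.comp (preimage_symm_eq hρ)), hL2]
    rfl

lemma semiSq_eq (hu : IsWeakSolution N s Ω u) :
    cNs N s / 2 * (semiSq N s Ω u).toReal = mu1 N s Ω * ∫ x in Ω, u x ^ 2 := by
  simp only [← bform_self hu.memHs.measurable, hu.bform_eq u hu.memHs, pow_two]

lemma eq_zero_of_ae_eq_zero (hs : s ∈ Ioo 0 1) (hΩo : IsOpen Ω) (hΩne : Ω.Nonempty)
    (hu : IsWeakSolution N s Ω u) (hc : Continuous u) (h : u =ᵐ[volume.restrict Ω] 0) :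
    u = 0 := by
  have hcN := cNs_pos N hs
  have hL2 : ∫ x in Ω, u x ^ 2 = 0 := by
    refine integral_eq_zero_of_ae (h.mono fun x hx => ?_)
    simp only [hx, Pi.zero_apply, ne_eq, OfNat.ofNat_ne_zero, not_false_eq_true, zero_pow]
  have hsemi : semiSq N s Ω u = 0 := by
    have := hu.semiSq_eq
    rw [hL2, mul_zero, mul_eq_zero_iff_left (by positivity), ENNReal.toReal_eq_zero_iff] at this
    exact this.resolve_right hu.memHs.semiSq_ne_top
  rw [semiSq_eq_lintegral_diffQuotient, lintegral_eq_zero_iff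
    ((measurable_diffQuotient hu.memHs.measurable).pow_const 2).ennreal_ofReal] at hsemi
  have hUo : IsOpen {q : Euc N × Euc N | q.1 ∈ Ω ∧ u q.1 ≠ u q.2} :=
    (hΩo.preimage continuous_fst).inter
      (isOpen_ne_fun (hc.comp continuous_fst) (hc.comp continuous_snd))
  have hU := eq_empty_of_ae_restrict_of_forall_not hUo
    (fun q hq => Or.inl (subset_closure hq.1)) hsemi fun q hq hq0 => by
      have hpos : 0 < diffQuotient N s u q ^ 2 := by
        rw [diffQuotient_sq]
        exact div_pos (sq_pos_of_ne_zero (sub_ne_zero.2 hq.2))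
          (kern_pos fun h => hq.2 (congrArg u h))
      exact hpos.not_ge (ENNReal.ofReal_eq_zero.1 hq0)
  obtain ⟨x, hx⟩ := hΩne
  have hux : u x = 0 :=
    Measure.eqOn_open_of_ae_eq h hΩo hc.continuousOn continuousOn_const hx
  ext y
  by_contra hy
  exact eq_empty_iff_forall_notMem.1 hU (x, y) ⟨hx, fun h => hy (h ▸ hux)⟩

lemma mul_nonneg_of_antisymmetricAcross (hs : s ∈ Ioo 0 1) (hΩo : IsOpen Ω)
    (hΩ : (ℝ ∙ e)ᗮ.reflection ⁻¹' Ω = Ω) (hv : IsWeakSolution N s Ω v) (hc : Continuous v)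
    (hanti : AntisymmetricAcross e v) (hx : x ∈ Ω) (hxe : 0 < inner ℝ x e)
    (hye : 0 < inner ℝ y e) : 0 ≤ v x * v y := by
  have hzHs := hanti.memHs_signRearrangement hs.1 hΩ hv.memHs
  have hRayleigh := mu1_mul_integral_sq_le hs hzHs
    ((antisymmetricAcross_signRearrangement hanti).setIntegral_eq_zero hΩ)
  simp only [hanti.signRearrangement_sq, ← hv.semiSq_eq] at hRayleigh
  refine hanti.mul_nonneg_of_semiSq_le hs.1 hΩo hΩ hc hv.memHs ?_ hx hxe hye
  exact (ENNReal.toReal_le_toReal hv.memHs.semiSq_ne_top hzHs.semiSq_ne_top).1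
    (le_of_mul_le_mul_left hRayleigh (half_pos (cNs_pos N hs)))

lemma eq_zero_of_even_of_antisymmetricAcross (hs : s ∈ Ioo 0 1) (hΩo : IsOpen Ω)
    (hΩne : Ω.Nonempty) (hΩ : (ℝ ∙ e)ᗮ.reflection ⁻¹' Ω = Ω) (hΩneg : ∀ x ∈ Ω, -x ∈ Ω)
    (hv : IsWeakSolution N s Ω v) (hc : Continuous v) (heven : v.Even)
    (hanti : AntisymmetricAcross e v) : v = 0 := by
  have hpos : ∀ x ∈ Ω, 0 < inner ℝ x e → v x = 0 := by
    intro x hx hxe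
    have hmul := hv.mul_nonneg_of_antisymmetricAcross hs hΩo hΩ hc hanti
      (y := -(ℝ ∙ e)ᗮ.reflection x) hx hxe (by rwa [inner_neg_left, inner_reflection_self, neg_neg])
    rw [heven, hanti, mul_neg] at hmul
    exact mul_self_eq_zero.1 ((neg_nonneg.1 hmul).antisymm (mul_self_nonneg _))
  refine hv.eq_zero_of_ae_eq_zero hs hΩo hΩne hc
    (ae_restrict_of_forall_mem hΩo.measurableSet fun x hx => ?_)
  obtain h | h | h := lt_trichotomy (inner ℝ x e : ℝ) 0
  · rw [← heven x]
    exact hpos (-x) (hΩneg x hx) (by rwa [inner_neg_left, neg_pos])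
  · exact hanti.eq_zero_of_inner_eq_zero h
  · exact hpos x hx h

lemma comp_reflection_eq_self_of_even (hs : s ∈ Ioo 0 1) (hΩo : IsOpen Ω) (hΩne : Ω.Nonempty)
    (hΩfin : volume Ω ≠ ⊤) (hΩ : (ℝ ∙ e)ᗮ.reflection ⁻¹' Ω = Ω) (hΩneg : ∀ x ∈ Ω, -x ∈ Ω)
    (hu : IsWeakSolution N s Ω u) (hc : Continuous u) (heven : u.Even) :
    u ∘ (ℝ ∙ e)ᗮ.reflection = u := by
  rw [← sub_eq_zero]
  refine ((hu.comp hΩ).sub hΩfin hu).eq_zero_of_even_of_antisymmetricAcross (e := e) hs hΩo hΩne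
    hΩ hΩneg ((hc.comp (LinearIsometryEquiv.continuous _)).sub hc) (fun x => ?_) fun x => ?_
  · simp only [Pi.sub_apply, Function.comp_apply, map_neg, heven _]
  · simp only [Pi.sub_apply, Function.comp_apply, Submodule.reflection_reflection, neg_sub]

lemma radial_of_even (hs : s ∈ Ioo 0 1) (hΩo : IsOpen Ω) (hΩne : Ω.Nonempty)
    (hΩfin : volume Ω ≠ ⊤) (hΩ : ∀ ρ : Euc N ≃ₗᵢ[ℝ] Euc N, ρ ⁻¹' Ω = Ω)
    (hu : IsWeakSolution N s Ω u) (hc : Continuous u) (heven : u.Even) : Radial N u := by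
  have hΩneg : ∀ x ∈ Ω, -x ∈ Ω := (hΩ (.neg ℝ)).ge
  have hfactors : u.FactorsThrough norm := by
    intro x y hxy
    rw [← Submodule.reflection_sub hxy]
    exact (congrFun (hu.comp_reflection_eq_self_of_even hs hΩo hΩne hΩfin (hΩ _) hΩneg hc heven)
      x).symm
  obtain ⟨f, hf⟩ := Function.factorsThrough_iff _ |>.1 hfactors
  exact ⟨f, congrFun hf⟩

end IsWeakSolution

end WeakSolution

section FoliatedSchwarz

variable {N : ℕ} {p x y : Euc N} {u : Euc N → ℝ}

lemma FoliatedSchwarz.eq_of_norm_eq_of_inner_eq (hu : FoliatedSchwarz N p u) (hnorm : ‖x‖ = ‖y‖)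
    (hinner : (inner ℝ x p : ℝ) = inner ℝ y p) : u x = u y := by
  obtain ⟨uh, -, huh⟩ := hu
  obtain rfl | hx := eq_or_ne x 0
  · rw [norm_zero, eq_comm, norm_eq_zero] at hnorm
    rw [hnorm]
  · have hy : y ≠ 0 := norm_ne_zero_iff.1 (hnorm ▸ norm_ne_zero_iff.2 hx)
    rw [huh x hx, huh y hy, hnorm, hinner]

lemma reflect_eq_reflection (hp : ‖p‖ = 1) (x : Euc N) :
    reflect N p x = (ℝ ∙ p)ᗮ.reflection x := by
  rw [reflect, Submodule.reflection_orthogonal_apply, Submodule.reflection_singleton_apply, hp,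
    real_inner_comm, neg_sub, two_mul, add_smul, two_smul]
  simp only [RCLike.ofReal_real_eq_id, id, one_pow, div_one]

lemma FoliatedSchwarz.apply_reflect (hu : FoliatedSchwarz N p u) (hp : ‖p‖ = 1) (x : Euc N) :
    u (reflect N p x) = u (-x) := by
  rw [reflect_eq_reflection hp]
  refine hu.eq_of_norm_eq_of_inner_eq ?_ ?_
  · rw [LinearIsometryEquiv.norm_map, norm_neg]
  · rw [inner_reflection_self, inner_neg_left]

end FoliatedSchwarz

theorem statement18_general {N : ℕ} {s : ℝ} (hs : s ∈ Ioo 0 1) {Ω : Set (Euc N)}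
    (hΩo : IsOpen Ω) (hΩfin : volume Ω ≠ ⊤) (hΩ : ∀ ρ : Euc N ≃ₗᵢ[ℝ] Euc N, ρ ⁻¹' Ω = Ω)
    {u : Euc N → ℝ} (hu : IsFirstEigen N s Ω u) (hc : Continuous u) (hodd : ¬ u.Odd) :
    IsFirstEigen N s Ω (fun x => u x + u (-x)) ∧ Radial N (fun x => u x + u (-x)) := by
  obtain ⟨hweak, hne⟩ := isFirstEigen_iff.1 hu
  have hΩne : Ω.Nonempty := by
    rw [nonempty_iff_ne_empty]
    rintro rfl
    exact hne (by simp only [Measure.restrict_empty, ae_zero, EventuallyEq, eventually_bot])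
  have hw : IsWeakSolution N s Ω fun x => u x + u (-x) :=
    hweak.add hΩfin (hweak.comp (hΩ (.neg ℝ)))
  have hwc : Continuous fun x => u x + u (-x) := hc.add (hc.comp continuous_neg)
  have heven : Function.Even fun x => u x + u (-x) := fun x => by
    simp only [neg_neg, add_comm]
  refine ⟨isFirstEigen_iff.2 ⟨hw, fun h => hodd fun x => ?_⟩,
    hw.radial_of_even hs hΩo hΩne hΩfin hΩ hwc heven⟩
  exact (neg_eq_of_add_eq_zero_right
    (congrFun (hw.eq_zero_of_ae_eq_zero hs hΩo hΩne hwc h) x)).symm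

/-- Proposition 4.7: if a continuous first nontrivial eigenfunction `u` in a
ball is antisymmetric with respect to no hyperplane through the origin, and `u` is foliated
Schwarz symmetric w.r.t. `p`, then `u + u∘σ_p` is a radially symmetric first nontrivial
eigenfunction. -/
theorem statement18 (N : ℕ) (hN : 2 ≤ N) (s : ℝ) (hs : s ∈ Set.Ioo (0 : ℝ) 1)
    (R : ℝ) (hR : 0 < R) (B : Set (Euc N)) (hB : B = Metric.ball (0 : Euc N) R)
    (u : Euc N → ℝ) (hu : IsFirstEigen N s B u) (hc : Continuous u)
    (hnoanti : ∀ e : Euc N, ‖e‖ = 1 → ¬ (∀ x : Euc N, u (reflect N e x) = - u x))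
    (p : Euc N) (hp : ‖p‖ = 1) (hfs : FoliatedSchwarz N p u) :
    IsFirstEigen N s B (fun x => u x + u (reflect N p x)) ∧
    Radial N (fun x => u x + u (reflect N p x)) := by
  subst hB
  simpa only [hfs.apply_reflect hp] using statement18_general hs Metric.isOpen_ball
    measure_ball_lt_top.ne (fun ρ => by ext x; simp) hu hc
    (by simpa only [hfs.apply_reflect hp, Function.Odd] using hnoanti p hp)

end FracNeumann
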